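/- arXiv:0911.1093 — 2 statements merged into one kernel-verified Lean document; each statement's English description precedes it below -/
import Mathlib

section
/- Let p ≥ 5 be a prime, q = 2(p−1), and let n ≥ 6 be an integer. Then the unique admissible monomial of total filtration p−1 and total degree q((p−1)p^{n−1} + (p−1)p^{n−2} + ⋯ + (p−1)p² + (p−2)p + (p−2)) + (p−3) is the multiset consisting of a_n with multiplicity p−3 together with h_{n,0} and h_{n−2,2}. (This is the combinatorial content of the step in the proof of Lemma 3.1, case (ii), where ω₁ is shown to equal a_n^{p−3} h_{n,0} h_{n−2,2} up to sign.) -/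
/-- A formal May spectral sequence generator: `a k`, `h i j`, or `b i j`. -/
inductive MayGen : Type
  | a (k : ℕ)
  | h (i j : ℕ)
  | b (i j : ℕ)
  deriving DecidableEq

namespace MayGen

/-- Validity: the generators `h i j` and `b i j` require `i ≥ 1`. -/
def IsValid : MayGen → Prop
  | a _ => True
  | h i _ => 1 ≤ i
  | b i _ => 1 ≤ i

/-- May filtration of a generator. -/
def filt : MayGen → ℕ
  | a _ => 1
  | h _ _ => 1
  | b _ _ => 2

/-- Internal degree of a generator (at the prime `p`). -/
def deg (p : ℕ) : MayGen → ℕ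
  | a k => 2 * p ^ k - 1
  | h i j => 2 * (p ^ i - 1) * p ^ j
  | b i j => 2 * (p ^ i - 1) * p ^ (j + 1)

end MayGen

/-- Total filtration of a multiset of May generators. -/
def totalFilt (S : Multiset MayGen) : ℕ := (S.map MayGen.filt).sum

/-- Total internal degree of a multiset of May generators. -/
def totalDeg (p : ℕ) (S : Multiset MayGen) : ℕ := (S.map (MayGen.deg p)).sum

/-- An admissible monomial: each exterior generator `h i j` occurs at most once. -/
def Admissible (S : Multiset MayGen) : Prop := ∀ i j : ℕ, S.count (MayGen.h i j) ≤ 1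

/-- The `j`-th digit (`j ≥ -1`) of `t` in the mixed radix `(q, p, p, …)` with
`q = 2(p-1)`:  `t = c₋₁ + q·Σ_{j≥0} c_j p^j` with `0 ≤ c₋₁ < q`, `0 ≤ c_j < p`. -/
def mayDigit (p t : ℕ) (j : ℤ) : ℕ :=
  if j = -1 then t % (2 * (p - 1))
  else if 0 ≤ j then (t / (2 * (p - 1)) / p ^ j.toNat) % p
  else 0

/-!
Since `b i j` and `h i (j + 1)` have the same degree, one may trade each `b` for an `h`, which
lowers the filtration. For the resulting monomial in the `a k` and `h i j`, reduction modulo `q`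
shows that there are exactly `p - 3` factors `a k`, hence at most two factors `h i j`.
As `deg (a k) = 2 p ^ k - 1` and `deg (h i j) = 2 p ^ (i + j) - 2 p ^ j`, the degree equation
becomes an equality between two sums of equally many powers of `p`,
`∑ p ^ k + ∑ p ^ (i + j) + p ^ 2 + 1 = (p - 1) p ^ n + ∑ p ^ j`.
The left-hand side is carry-free, and carrying strictly shortens a sum of powers of `p`, so both
sides consist of the same powers.
-/

section PowSum

/-- The sum `∑ p ^ k` over the exponents `k ∈ M`. A multiset with all multiplicities less than `p`
(a carry-free sum) encodes the base `p` expansion of its `powSum`. -/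
def powSum (p : ℕ) (M : Multiset ℕ) : ℕ := (M.map (p ^ ·)).sum

variable {p : ℕ} {M N : Multiset ℕ}

@[simp]
theorem powSum_cons (k : ℕ) : powSum p (k ::ₘ M) = p ^ k + powSum p M := by
  simp [powSum]

@[simp]
theorem powSum_singleton (k : ℕ) : powSum p {k} = p ^ k := by
  simp [powSum]

@[simp]
theorem powSum_add : powSum p (M + N) = powSum p M + powSum p N := by
  simp [powSum]

@[simp]
theorem powSum_replicate (c k : ℕ) : powSum p (Multiset.replicate c k) = c * p ^ k := by
  simp [powSum]

theorem powSum_le_card_mul_pow (hp : 0 < p) {m : ℕ} (hM : ∀ k ∈ M, k ≤ m) :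
    powSum p M ≤ M.card * p ^ m := by
  simpa [powSum] using Multiset.sum_le_card_nsmul (M.map (p ^ ·)) (p ^ m)
    (by simpa using fun k hk => Nat.pow_le_pow_right hp (hM k hk))

theorem powSum_modEq_card (hp : 0 < p) (M : Multiset ℕ) : powSum p M ≡ M.card [MOD p - 1] := by
  have hpow (k : ℕ) : p ^ k ≡ 1 [MOD p - 1] := by
    simpa using ((Nat.modEq_iff_dvd' hp).mpr dvd_rfl).symm.pow k
  induction M using Multiset.induction with
  | empty => rfl
  | cons k M ih => simpa [add_comm] using (hpow k).add ih

theorem powSum_eq_sum_range {l : ℕ} (hM : M.toFinset ⊆ Finset.range l) :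
    powSum p M = ∑ k ∈ Finset.range l, M.count k * p ^ k := by
  rw [powSum, Finset.sum_multiset_map_count]
  exact Finset.sum_subset hM fun k _ hk => by simp_all

theorem eq_of_powSum_eq_of_count_lt (hM : ∀ k, M.count k < p) (hN : ∀ k, N.count k < p)
    (h : powSum p M = powSum p N) : M = N := by
  obtain ⟨l, hl⟩ := (M ∪ N).toFinset.exists_nat_subset_range
  rw [Multiset.toFinset_union, Finset.union_subset_iff] at hl
  have hdigits : (fun k : Fin l => (⟨M.count ↑k, hM k⟩ : Fin p)) =
      fun k => ⟨N.count ↑k, hN k⟩ :=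
    finFunctionFinEquiv.injective <| Fin.ext <| by
      simpa [finFunctionFinEquiv_apply, powSum_eq_sum_range hl.1, powSum_eq_sum_range hl.2,
        Finset.sum_range] using h
  ext k
  by_cases hk : k < l
  · simpa using congrFun hdigits ⟨k, hk⟩
  · have hkM : k ∉ M := fun hkM => hk (by simpa using hl.1 (by simpa using hkM))
    have hkN : k ∉ N := fun hkN => hk (by simpa using hl.2 (by simpa using hkN))
    rw [Multiset.count_eq_zero.mpr hkM, Multiset.count_eq_zero.mpr hkN]

theorem exists_powSum_eq_card_lt (hp : 2 ≤ p) {k : ℕ} (hk : p ≤ M.count k) :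
    ∃ N, powSum p N = powSum p M ∧ N.card < M.card := by
  obtain ⟨R, rfl⟩ := Multiset.le_iff_exists_add.mp (Multiset.le_count_iff_replicate_le.mp hk)
  refine ⟨(k + 1) ::ₘ R, ?_, ?_⟩
  · simp [pow_succ']
  · simp only [Multiset.card_cons, Multiset.card_add, Multiset.card_replicate]
    omega

theorem eq_of_powSum_eq_of_card_le (hp : 2 ≤ p) (hM : ∀ k, M.count k < p)
    (h : powSum p N = powSum p M) (hcard : N.card ≤ M.card) : N = M := by
  induction hc : N.card using Nat.strong_induction_on generalizing N with
  | _ c ih =>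
    subst hc
    by_cases hN : ∀ k, N.count k < p
    · exact eq_of_powSum_eq_of_count_lt hN hM h
    · push Not at hN
      obtain ⟨k, hk⟩ := hN
      obtain ⟨N', hN', hlt⟩ := exists_powSum_eq_card_lt hp hk
      have hN'M : N' = M := ih _ hlt (hN'.trans h) (by omega) rfl
      exact absurd hcard (by simpa [hN'M] using hlt)

theorem count_add_lt_of_le_powSum (hp : 3 ≤ p) {n : ℕ} {T D : Multiset ℕ} (hD : D.Nodup)
    (hDn : ∀ k ∈ D, k < n) (hDp : D.card < p) (hT : T.card < p)
    (h : (p - 1) * p ^ n ≤ powSum p (T + D)) (k : ℕ) : (T + D).count k < p := by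
  by_contra! hk
  rw [Multiset.count_add] at hk
  have hkD : D.count k ≤ 1 := Multiset.nodup_iff_count_le_one.mp hD k
  have hkT : T.count k ≤ T.card := Multiset.count_le_card k T
  have hall : ∀ x ∈ T, k = x := Multiset.count_eq_card.mp (by omega)
  have hkn : k < n := hDn k (Multiset.count_pos.mp (by omega))
  have hle : ∀ x ∈ T + D, x ≤ n - 1 := by
    intro x hx
    rcases Multiset.mem_add.mp hx with hx | hx
    · have := hall x hx
      omega
    · have := hDn x hx
      omega
  have hlt : powSum p (T + D) < (p - 1) * p ^ n :=
    calc powSum p (T + D) ≤ (T + D).card * p ^ (n - 1) := powSum_le_card_mul_pow (by omega) hle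
      _ ≤ (p - 1) * 2 * p ^ (n - 1) := by
        gcongr
        rw [Multiset.card_add]
        omega
      _ < (p - 1) * p * p ^ (n - 1) := by
        have hpow : 0 < p ^ (n - 1) := by positivity
        exact Nat.mul_lt_mul_of_pos_right (Nat.mul_lt_mul_of_pos_left hp (by omega)) hpow
      _ = (p - 1) * p ^ n := by
        rw [mul_assoc, mul_pow_sub_one (by omega)]
  omega

theorem eq_replicate_and_eq_of_powSum_eq (hp : 3 ≤ p) {n : ℕ} {T D L : Multiset ℕ} (hD : D.Nodup)
    (hDn : ∀ k ∈ D, k < n) (hDp : D.card < p) (hL : L.card ≤ D.card)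
    (hT : T.card + D.card = p - 1 + L.card)
    (h : powSum p (T + D) = powSum p (Multiset.replicate (p - 1) n + L)) :
    T = Multiset.replicate (p - 1) n ∧ L = D := by
  have hcount : ∀ k, (T + D).count k < p :=
    count_add_lt_of_le_powSum hp hD hDn hDp (by omega) (by simp [h])
  have heq : Multiset.replicate (p - 1) n + L = T + D :=
    eq_of_powSum_eq_of_card_le (by omega) hcount h.symm (by simp [hT])
  have hDL : D ≤ L := (Multiset.le_iff_subset hD).mpr fun k hk => by
    have hmem : k ∈ Multiset.replicate (p - 1) n + L := heq ▸ Multiset.mem_add.mpr (Or.inr hk)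
    have hkn := hDn k hk
    rcases Multiset.mem_add.mp hmem with hk' | hk'
    · exact absurd (Multiset.eq_of_mem_replicate hk') hkn.ne
    · exact hk'
  obtain rfl := Multiset.eq_of_le_of_card_le hDL hL
  exact ⟨(add_right_cancel heq).symm, rfl⟩

end PowSum

section Monomials

/-- The monomial `∏ a k * ∏ h i j`, for `k ∈ A` and `(i, j) ∈ K`, without factors `b i j`.
Monomials of this form suffice for the classification, each `b i j` being traded for
`h i (j + 1)`. -/
def ahMonomial (A : Multiset ℕ) (K : Multiset (ℕ × ℕ)) : Multiset MayGen :=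
  A.map MayGen.a + K.map fun x => MayGen.h x.1 x.2

theorem forall_isValid_ahMonomial_iff {A : Multiset ℕ} {K : Multiset (ℕ × ℕ)} :
    (∀ x ∈ ahMonomial A K, x.IsValid) ↔ ∀ x ∈ K, 1 ≤ x.1 := by
  simp only [ahMonomial, Multiset.mem_add, Multiset.mem_map, or_imp, forall_and,
    forall_exists_index, and_imp, forall_apply_eq_imp_iff₂, MayGen.IsValid, implies_true,
    true_and]

theorem admissible_ahMonomial_iff {A : Multiset ℕ} {K : Multiset (ℕ × ℕ)} :
    Admissible (ahMonomial A K) ↔ K.Nodup := by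
  have hinj : Function.Injective fun x : ℕ × ℕ => MayGen.h x.1 x.2 := fun x y hxy =>
    Prod.ext (MayGen.h.inj hxy).1 (MayGen.h.inj hxy).2
  have hcount (i j : ℕ) : (ahMonomial A K).count (.h i j) = K.count (i, j) := by
    have ha : (A.map MayGen.a).count (.h i j) = 0 := Multiset.count_eq_zero.mpr (by simp)
    rw [ahMonomial, Multiset.count_add, ha, zero_add]
    exact Multiset.count_map_eq_count' _ K hinj (i, j)
  simp only [Admissible, hcount, Multiset.nodup_iff_count_le_one, Prod.forall]

theorem totalFilt_ahMonomial (A : Multiset ℕ) (K : Multiset (ℕ × ℕ)) :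
    totalFilt (ahMonomial A K) = A.card + K.card := by
  simp [totalFilt, ahMonomial, Function.comp_def, MayGen.filt]

theorem exists_ahMonomial_totalDeg_eq_card_le (p : ℕ) (S : Multiset MayGen) :
    ∃ A K, totalDeg p (ahMonomial A K) = totalDeg p S ∧ A.card + K.card ≤ totalFilt S ∧
      (A.card + K.card = totalFilt S → S = ahMonomial A K) := by
  induction S using Multiset.induction with
  | empty => exact ⟨0, 0, by simp [ahMonomial, totalFilt]⟩
  | cons x S ih =>
    obtain ⟨A, K, hdeg, hle, heq⟩ := ih
    simp only [totalDeg, totalFilt, ahMonomial, Multiset.map_cons, Multiset.sum_cons] at *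
    cases x with
    | a k =>
      refine ⟨k ::ₘ A, K, ?_, ?_, fun h => ?_⟩
      · simp [← hdeg]
      · simp only [Multiset.card_cons, MayGen.filt]
        omega
      · simp only [Multiset.card_cons, MayGen.filt] at h
        simp [heq (by omega)]
    | h i j =>
      refine ⟨A, (i, j) ::ₘ K, ?_, ?_, fun h => ?_⟩
      · simp [← hdeg]
      · simp only [Multiset.card_cons, MayGen.filt]
        omega
      · simp only [Multiset.card_cons, MayGen.filt] at h
        simp [heq (by omega)]
    | b i j =>
      refine ⟨A, (i, j + 1) ::ₘ K, ?_, ?_, fun h => ?_⟩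
      · simp [← hdeg, MayGen.deg]
      · simp only [Multiset.card_cons, MayGen.filt]
        omega
      · simp only [Multiset.card_cons, MayGen.filt] at h
        omega

variable {p : ℕ}

theorem totalDeg_ahMonomial_add (hp : 0 < p) (A : Multiset ℕ) (K : Multiset (ℕ × ℕ)) :
    totalDeg p (ahMonomial A K) + A.card + 2 * powSum p (K.map Prod.snd) =
      2 * powSum p (A + K.map fun x => x.1 + x.2) := by
  have ha : totalDeg p (A.map MayGen.a) + A.card = 2 * powSum p A := by
    induction A using Multiset.induction with
    | empty => rfl
    | cons k A ih =>
      have hk : 0 < p ^ k := by positivity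
      simp only [totalDeg, Multiset.map_cons, Multiset.sum_cons, Multiset.card_cons, MayGen.deg,
        powSum_cons] at ih ⊢
      omega
  have hh : totalDeg p (K.map fun x => MayGen.h x.1 x.2) + 2 * powSum p (K.map Prod.snd) =
      2 * powSum p (K.map fun x => x.1 + x.2) := by
    induction K using Multiset.induction with
    | empty => rfl
    | cons x K ih =>
      have hx : 2 * (p ^ x.1 - 1) * p ^ x.2 + 2 * p ^ x.2 = 2 * p ^ (x.1 + x.2) := by
        rw [← add_mul, ← mul_add_one, Nat.sub_add_cancel (Nat.one_le_pow _ _ hp), pow_add,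
          mul_assoc]
      simp only [totalDeg, Multiset.map_cons, Multiset.sum_cons, MayGen.deg, powSum_cons] at ih ⊢
      omega
  simp only [ahMonomial, totalDeg, Multiset.map_add, Multiset.sum_add, powSum_add] at ha hh ⊢
  omega

theorem totalDeg_ahMonomial_modEq (hp : 0 < p) (A : Multiset ℕ) (K : Multiset (ℕ × ℕ)) :
    totalDeg p (ahMonomial A K) ≡ A.card [MOD 2 * (p - 1)] := by
  have htwice (M : Multiset ℕ) : 2 * powSum p M ≡ 2 * M.card [MOD 2 * (p - 1)] :=
    (powSum_modEq_card hp M).mul_left' 2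
  have htail := htwice (K.map Prod.snd)
  have hlead := htwice (A + K.map fun x => x.1 + x.2)
  rw [Multiset.card_map] at htail
  rw [← totalDeg_ahMonomial_add hp, Multiset.card_add, Multiset.card_map, mul_add,
    two_mul A.card] at hlead
  exact (htail.add_right_cancel hlead).add_right_cancel' A.card

theorem eq_map_snd_of_forall_add_eq {n : ℕ} {K : Multiset (ℕ × ℕ)}
    (hK : ∀ x ∈ K, x.1 + x.2 = n) : K = (K.map Prod.snd).map fun j => (n - j, j) := by
  have hfst : ∀ x ∈ K, (n - x.2, x.2) = x := fun x hx =>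
    Prod.ext (Nat.sub_eq_of_eq_add (hK x hx).symm) rfl
  rw [Multiset.map_map]
  exact ((Multiset.map_congr rfl hfst).trans K.map_id').symm

end Monomials

section TargetDegree

/-- The degree `q((p-1)p^{n-1} + ⋯ + (p-1)p² + (p-2)p + (p-2)) + (p-3)`, where `q = 2(p-1)`, in
which the monomials of filtration `p - 1` are classified. -/
def targetDeg (p n : ℕ) : ℕ :=
  2 * (p - 1) * ((p - 1) * ∑ j ∈ Finset.Icc 2 (n - 1), p ^ j + (p - 2) * p + (p - 2)) + (p - 3)

variable {p n : ℕ}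

theorem sub_one_mul_sum_Icc_pow_add (hp : 0 < p) {m : ℕ} (hmn : m < n) :
    (p - 1) * ∑ j ∈ Finset.Icc m (n - 1), p ^ j + p ^ m = p ^ n := by
  rw [Finset.Icc_sub_one_right_eq_Ico_of_not_isMin (by simp; omega)]
  zify [hp]
  rw [mul_comm, geom_sum_Ico_mul _ hmn.le, sub_add_cancel]

theorem targetDeg_add (hp : 3 ≤ p) (hn : 3 ≤ n) :
    targetDeg p n + (p - 3) + 2 * powSum p {2, 0} =
      2 * powSum p (Multiset.replicate (p - 1) n) := by
  rw [powSum_replicate, ← sub_one_mul_sum_Icc_pow_add (m := 2) (by omega : 0 < p) (by omega)]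
  obtain ⟨r, rfl⟩ := Nat.exists_eq_add_of_le' hp
  simp only [targetDeg, Multiset.insert_eq_cons, powSum_cons, powSum_singleton,
    Nat.add_sub_cancel, show r + 3 - 1 = r + 2 from rfl, show r + 3 - 2 = r + 1 from rfl]
  ring

theorem totalDeg_ahMonomial_eq_targetDeg_iff (hp : 3 ≤ p) (hn : 3 ≤ n) {A : Multiset ℕ}
    {K : Multiset (ℕ × ℕ)} (hA : A.card = p - 3) :
    totalDeg p (ahMonomial A K) = targetDeg p n ↔
      powSum p ((A + K.map fun x => x.1 + x.2) + {2, 0}) =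
        powSum p (Multiset.replicate (p - 1) n + K.map Prod.snd) := by
  have htarget := targetDeg_add hp hn
  have hdeg := totalDeg_ahMonomial_add (by omega : 0 < p) A K
  rw [powSum_add, powSum_add (M := Multiset.replicate _ _)]
  omega

theorem card_eq_of_totalDeg_ahMonomial_eq_targetDeg (hp : 3 ≤ p) {A : Multiset ℕ}
    {K : Multiset (ℕ × ℕ)} (hA : A.card < 2 * (p - 1))
    (hdeg : totalDeg p (ahMonomial A K) = targetDeg p n) : A.card = p - 3 := by
  have htarget : targetDeg p n ≡ p - 3 [MOD 2 * (p - 1)] := Nat.modulus_mul_add_modEq_iff.mpr rfl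
  have hmod : A.card ≡ p - 3 [MOD 2 * (p - 1)] :=
    (hdeg ▸ totalDeg_ahMonomial_modEq (by omega) A K).symm.trans htarget
  exact hmod.eq_of_lt_of_lt hA (by omega)

theorem eq_of_totalDeg_ahMonomial_eq_targetDeg (hp : 3 ≤ p) (hn : 3 ≤ n) {A : Multiset ℕ}
    {K : Multiset (ℕ × ℕ)} (hcard : A.card + K.card ≤ p - 1)
    (hdeg : totalDeg p (ahMonomial A K) = targetDeg p n) :
    A = Multiset.replicate (p - 3) n ∧ K = {(n, 0), (n - 2, 2)} := by
  have hA : A.card = p - 3 := card_eq_of_totalDeg_ahMonomial_eq_targetDeg hp (by omega) hdeg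
  have hlt : ∀ k ∈ ({2, 0} : Multiset ℕ), k < n := by
    simp only [Multiset.insert_eq_cons, Multiset.mem_cons, Multiset.mem_singleton]
    omega
  have hT : (A + K.map fun x => x.1 + x.2).card + 2 = p - 1 + (K.map Prod.snd).card := by
    simp only [Multiset.card_add, Multiset.card_map]
    omega
  obtain ⟨hlead, htail⟩ :=
    eq_replicate_and_eq_of_powSum_eq hp (D := {2, 0}) (by decide) hlt hp
      (by rw [Multiset.card_map, Multiset.card_pair]; omega) hT
      ((totalDeg_ahMonomial_eq_targetDeg_iff hp hn hA).mp hdeg)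
  have hall : ∀ k ∈ A + K.map fun x => x.1 + x.2, k = n := (Multiset.eq_replicate.mp hlead).2
  have hadd : ∀ x ∈ K, x.1 + x.2 = n := fun x hx =>
    hall _ (Multiset.mem_add.mpr (Or.inr (Multiset.mem_map_of_mem _ hx)))
  refine ⟨Multiset.eq_replicate.mpr
    ⟨hA, fun k hk => hall k (Multiset.mem_add.mpr (Or.inl hk))⟩, ?_⟩
  rw [eq_map_snd_of_forall_add_eq hadd, htail]
  exact Multiset.pair_comm _ _

theorem totalDeg_ahMonomial_replicate (hp : 3 ≤ p) (hn : 3 ≤ n) :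
    totalDeg p (ahMonomial (Multiset.replicate (p - 3) n) {(n, 0), (n - 2, 2)}) =
      targetDeg p n := by
  rw [totalDeg_ahMonomial_eq_targetDeg_iff hp hn (Multiset.card_replicate _ _)]
  have hlead : Multiset.replicate (p - 3) n + {n + 0, n - 2 + 2} =
      Multiset.replicate (p - 1) n := by
    rw [add_zero, Nat.sub_add_cancel (by omega), show p - 1 = p - 3 + 2 by omega,
      Multiset.replicate_add]
    rfl
  exact congrArg (powSum p) (congrArg₂ (· + ·) hlead (Multiset.pair_comm 2 0))

end TargetDegree

theorem stmt13_general (p : ℕ) (hp : 3 ≤ p) (n : ℕ) (hn : 3 ≤ n) (S : Multiset MayGen) :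
    ((∀ x ∈ S, x.IsValid) ∧ Admissible S ∧ totalFilt S = p - 1 ∧
        totalDeg p S =
          2 * (p - 1) * ((p - 1) * ∑ j ∈ Finset.Icc 2 (n - 1), p ^ j +
            (p - 2) * p + (p - 2)) + (p - 3)) ↔
      S = Multiset.replicate (p - 3) (MayGen.a n) + {MayGen.h n 0, MayGen.h (n - 2) 2} := by
  have htarget : Multiset.replicate (p - 3) (MayGen.a n) + {MayGen.h n 0, MayGen.h (n - 2) 2} =
      ahMonomial (Multiset.replicate (p - 3) n) {(n, 0), (n - 2, 2)} := by
    simp [ahMonomial]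
  have hcard : (Multiset.replicate (p - 3) n).card +
      ({(n, 0), (n - 2, 2)} : Multiset (ℕ × ℕ)).card = p - 1 := by
    rw [Multiset.card_replicate, Multiset.card_pair]
    omega
  rw [htarget]
  constructor
  · rintro ⟨-, -, hfilt, hdeg⟩
    obtain ⟨A, K, hdeg', hle, heq⟩ := exists_ahMonomial_totalDeg_eq_card_le p S
    obtain ⟨rfl, rfl⟩ :=
      eq_of_totalDeg_ahMonomial_eq_targetDeg hp hn (hfilt ▸ hle) (hdeg'.trans hdeg)
    exact heq (hcard.trans hfilt.symm)
  · rintro rfl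
    refine ⟨forall_isValid_ahMonomial_iff.mpr ?_, admissible_ahMonomial_iff.mpr (by simp),
      (totalFilt_ahMonomial _ _).trans hcard, totalDeg_ahMonomial_replicate hp hn⟩
    simp only [Multiset.insert_eq_cons, Multiset.mem_cons, Multiset.mem_singleton,
      forall_eq_or_imp, forall_eq]
    omega

/-- for `n ≥ 6`, the unique admissible monomial of total filtration `p-1`
and total degree `q((p-1)p^{n-1} + ⋯ + (p-1)p² + (p-2)p + (p-2)) + (p-3)` is
`aₙ^{p-3} h_{n,0} h_{n-2,2}`. -/
theorem stmt13 (p : ℕ) (hp : p.Prime) (hp5 : 5 ≤ p) (n : ℕ) (hn : 6 ≤ n)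
    (S : Multiset MayGen) :
    ((∀ x ∈ S, x.IsValid) ∧ Admissible S ∧ totalFilt S = p - 1 ∧
        totalDeg p S =
          2 * (p - 1) * ((p - 1) * ∑ j ∈ Finset.Icc 2 (n - 1), p ^ j +
            (p - 2) * p + (p - 2)) + (p - 3)) ↔
      S = Multiset.replicate (p - 3) (MayGen.a n) + {MayGen.h n 0, MayGen.h (n - 2) 2} :=
  stmt13_general p (by omega) n (by omega) S
end

section
/- Let p ≥ 5 be a prime, q = 2(p−1), and let n ≥ 2 be an integer. Then there is no admissible monomial of total filtration p−1 and total degree q(p^n − 1) + (p − 3): every finite multiset of May generators with this total filtration and total degree must contain the exterior generator h_{n,0} at least twice and hence corresponds to the zero monomial. (This is the combinatorial content of the step in the proof of Lemma 3.1, case (i), where ω₁ is shown to vanish because it must contain two h_{n,0}'s.) -/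
/-!
Write degrees in the mixed radix `(q, p, p, …)`. Apart from the lowest digit, which is `1` for
`a k` and `0` for the others, the digits of the degree of a generator are `0` or `1`, the `1`s
filling an interval of positions: `[0, k)` for `a k`, `[j, j + i)` for `h i j` and
`[j + 1, j + 1 + i)` for `b i j`. A monomial of filtration `p - 1` has at most `p - 1` factors, so
these digits add up without carrying. In degree `q(pⁿ - 1) + r` with `r < q` and `n > 0`, the digit
at each position in `[0, n)` is `p - 1` and the higher digits vanish, so there are exactly `p - 1`
factors, each with interval `[0, n)`: each one is `a n` or `h n 0`, and the lowest digit says that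
exactly `r` of them are `a n`.
-/

open Finset

section Digits

variable {p : ℕ}

lemma eq_of_sum_range_mul_pow_eq {N : ℕ} {f g : ℕ → ℕ} (hf : ∀ j < N, f j < p)
    (hg : ∀ j < N, g j < p) (h : ∑ j ∈ range N, f j * p ^ j = ∑ j ∈ range N, g j * p ^ j)
    {j : ℕ} (hj : j < N) : f j = g j := by
  have hdigits : (fun i : Fin N ↦ (⟨f i, hf i i.isLt⟩ : Fin p)) = fun i ↦ ⟨g i, hg i i.isLt⟩ := by
    refine finFunctionFinEquiv.injective (Fin.ext ?_)
    simpa only [finFunctionFinEquiv_apply, Fin.sum_univ_eq_sum_range fun i ↦ f i * p ^ i,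
      Fin.sum_univ_eq_sum_range fun i ↦ g i * p ^ i] using h
  exact congrArg Fin.val (congrFun hdigits ⟨j, hj⟩)

lemma sum_multiset_map_count_of_subset {α M : Type*} [DecidableEq α] [AddCommMonoid M]
    {s : Multiset α} {t : Finset α} (hst : s.toFinset ⊆ t) (f : α → M) :
    (s.map f).sum = ∑ a ∈ t, s.count a • f a := by
  rw [sum_multiset_map_count]
  exact sum_subset hst (by simp +contextual)

lemma eq_of_sum_map_pow_eq {s t : Multiset ℕ} (hs : ∀ j, s.count j < p) (ht : ∀ j, t.count j < p)
    (h : (s.map (p ^ ·)).sum = (t.map (p ^ ·)).sum) : s = t := by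
  obtain ⟨N, hN⟩ := (s + t).toFinset.exists_nat_subset_range
  obtain ⟨hsN, htN⟩ := union_subset_iff.1 (Multiset.toFinset_add s t ▸ hN)
  simp only [sum_multiset_map_count_of_subset hsN, sum_multiset_map_count_of_subset htN,
    smul_eq_mul] at h
  ext j
  by_cases hj : j < N
  · exact eq_of_sum_range_mul_pow_eq (fun i _ ↦ hs i) (fun i _ ↦ ht i) h hj
  · have notMem {u : Multiset ℕ} (hu : u.toFinset ⊆ range N) : j ∉ u := fun hju ↦
      hj (mem_range.1 (hu (Multiset.mem_toFinset.2 hju)))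
    rw [Multiset.count_eq_zero.2 (notMem hsN), Multiset.count_eq_zero.2 (notMem htN)]

lemma count_bind_val {α : Type*} [DecidableEq α] (𝒜 : Multiset (Finset α)) (a : α) :
    (𝒜.bind Finset.val).count a = 𝒜.countP (a ∈ ·) := by
  induction 𝒜 using Multiset.induction_on with
  | empty => simp
  | cons A 𝒜 ih =>
    simp [Multiset.countP_cons, Multiset.count_eq_of_nodup A.nodup, ih, add_comm]

lemma eq_replicate_of_bind_val_eq_nsmul {α : Type*} {𝒜 : Multiset (Finset α)}
    {B : Finset α} (hB : B.Nonempty) {m : ℕ} (hcard : 𝒜.card ≤ m)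
    (h : 𝒜.bind Finset.val = m • B.val) : 𝒜 = Multiset.replicate m B := by
  classical
  have countP_mem (a : α) : 𝒜.countP (a ∈ ·) = if a ∈ B then m else 0 := by
    rw [← count_bind_val, h, Multiset.count_nsmul, Multiset.count_eq_of_nodup B.nodup]
    simp
  have card_eq : 𝒜.card = m := by
    obtain ⟨b, hb⟩ := hB
    refine hcard.antisymm ?_
    simpa [countP_mem, hb] using Multiset.countP_le_card (b ∈ ·) 𝒜
  refine Multiset.eq_replicate.2 ⟨card_eq, fun A hA ↦ Finset.ext fun a ↦ ?_⟩
  by_cases ha : a ∈ B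
  · have countP_eq_card : 𝒜.countP (a ∈ ·) = 𝒜.card := by rw [countP_mem, if_pos ha, card_eq]
    exact iff_of_true (Multiset.countP_eq_card.1 countP_eq_card A hA) ha
  · have countP_eq_zero : 𝒜.countP (a ∈ ·) = 0 := by rw [countP_mem, if_neg ha]
    exact iff_of_false (Multiset.countP_eq_zero.1 countP_eq_zero A hA) ha

lemma eq_replicate_of_sum_map_sum_pow_eq {𝒜 : Multiset (Finset ℕ)} {B : Finset ℕ}
    (hB : B.Nonempty) {m : ℕ} (hm : m < p) (hcard : 𝒜.card ≤ m)
    (h : (𝒜.map fun A ↦ ∑ j ∈ A, p ^ j).sum = m * ∑ j ∈ B, p ^ j) :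
    𝒜 = Multiset.replicate m B := by
  refine eq_replicate_of_bind_val_eq_nsmul hB hcard (eq_of_sum_map_pow_eq (p := p) ?_ ?_ ?_)
  · intro j
    rw [count_bind_val]
    exact (Multiset.countP_le_card _ 𝒜).trans_lt (hcard.trans_lt hm)
  · intro j
    rw [Multiset.count_nsmul]
    exact (mul_le_of_le_one_right (Nat.zero_le m)
      (Multiset.nodup_iff_count_le_one.1 B.nodup j)).trans_lt hm
  · rw [Multiset.map_bind, Multiset.sum_bind, Multiset.map_nsmul, Multiset.sum_nsmul, smul_eq_mul]
    exact h

lemma pred_mul_sum_Ico_pow (hp : 1 ≤ p) (i j : ℕ) :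
    (p - 1) * ∑ k ∈ Ico j (j + i), p ^ k = (p ^ i - 1) * p ^ j := by
  simp only [sum_Ico_eq_sum_range, Nat.add_sub_cancel_left, pow_add]
  rw [← mul_sum, mul_comm, mul_assoc, geom_sum_mul_of_one_le hp, mul_comm]

end Digits

lemma exists_eq_replicate_add_replicate {α : Type*} {a b : α} {s : Multiset α}
    (h : ∀ x ∈ s, x = a ∨ x = b) :
    ∃ k l, s = Multiset.replicate k a + Multiset.replicate l b := by
  classical
  refine ⟨s.count a, (s.filter (· ≠ a)).card, ?_⟩
  have hb : ∀ x ∈ s.filter (· ≠ a), x = b := fun x hx ↦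
    (h x (Multiset.mem_of_mem_filter hx)).resolve_left (Multiset.of_mem_filter (p := (· ≠ a)) hx)
  rw [← Multiset.eq_replicate_card.2 hb, ← Multiset.filter_eq', Multiset.filter_add_not]

namespace MayGen

/-- The positions `j ≥ 0` at which the degree of a generator, written in the mixed radix
`(q, p, p, …)` with `q = 2(p-1)`, has digit `1`; its other digits at positions `j ≥ 0` are `0`. -/
def digitSupport : MayGen → Finset ℕ
  | a k => range k
  | h i j => Ico j (j + i)
  | b i j => Ico (j + 1) (j + 1 + i)

/-- The lowest digit (position `-1`, in `[0, q)`) of the degree of a generator in the mixed radix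
`(q, p, p, …)` with `q = 2(p-1)`. -/
def unitDigit : MayGen → ℕ
  | a _ => 1
  | h _ _ => 0
  | b _ _ => 0

lemma deg_eq {p : ℕ} (hp : 1 ≤ p) (x : MayGen) :
    x.deg p = 2 * (p - 1) * ∑ j ∈ x.digitSupport, p ^ j + x.unitDigit := by
  cases x with
  | a k =>
    have one_le_pow : 1 ≤ p ^ k := Nat.one_le_pow k p hp
    rw [deg, digitSupport, unitDigit, mul_assoc, mul_comm (p - 1), geom_sum_mul_of_one_le hp]
    lia
  | h i j =>
    rw [deg, digitSupport, unitDigit, mul_assoc, mul_assoc, pred_mul_sum_Ico_pow hp, add_zero]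
  | b i j =>
    rw [deg, digitSupport, unitDigit, mul_assoc, mul_assoc, pred_mul_sum_Ico_pow hp, add_zero]

lemma eq_a_or_eq_h_of_digitSupport_eq_range {x : MayGen} {n : ℕ} (hn : n ≠ 0)
    (hx : x.digitSupport = range n) : x = a n ∨ x = h n 0 := by
  have zero_mem : 0 ∈ x.digitSupport := by simpa [hx] using hn.pos
  have card_eq : #x.digitSupport = n := by rw [hx, card_range]
  cases x with
  | a k => simpa [digitSupport] using card_eq
  | h i j =>
    obtain rfl : j = 0 := by simpa using (mem_Ico.1 zero_mem).1
    simpa [digitSupport] using card_eq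
  | b i j => simp [digitSupport] at zero_mem

lemma unitDigit_le_one (x : MayGen) : x.unitDigit ≤ 1 := by cases x <;> simp [unitDigit]

lemma one_le_filt (x : MayGen) : 1 ≤ x.filt := by cases x <;> simp [filt]

end MayGen

open MayGen

lemma totalDeg_eq {p : ℕ} (hp : 1 ≤ p) (S : Multiset MayGen) :
    totalDeg p S = 2 * (p - 1) * ((S.map digitSupport).map fun A ↦ ∑ j ∈ A, p ^ j).sum +
      (S.map unitDigit).sum := by
  rw [totalDeg, Multiset.map_congr rfl fun x _ ↦ deg_eq hp x, Multiset.sum_map_add,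
    Multiset.sum_map_mul_left, Multiset.map_map]
  rfl

lemma sum_map_unitDigit_le_card (S : Multiset MayGen) : (S.map unitDigit).sum ≤ S.card := by
  simpa using (S.map unitDigit).sum_le_card_nsmul 1 (by simp [unitDigit_le_one])

lemma card_le_totalFilt (S : Multiset MayGen) : S.card ≤ totalFilt S := by
  simpa [totalFilt] using (S.map filt).card_nsmul_le_sum (a := 1) (by simp [one_le_filt])

theorem stmt14_general {p n r : ℕ} (hn : n ≠ 0) (hr : r < 2 * (p - 1)) {S : Multiset MayGen}
    (hcard : S.card ≤ p - 1) (hdeg : totalDeg p S = 2 * (p - 1) * (p ^ n - 1) + r) :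
    S = Multiset.replicate r (a n) + Multiset.replicate (p - 1 - r) (h n 0) := by
  rw [totalDeg_eq (by lia), ← geom_sum_mul_of_one_le (by lia) n, mul_comm (∑ _ ∈ _, _)] at hdeg
  have unit_lt : (S.map unitDigit).sum < 2 * (p - 1) := by
    have := sum_map_unitDigit_le_card S
    lia
  have unit_eq : (S.map unitDigit).sum = r := by
    simpa only [Nat.mul_add_mod, Nat.mod_eq_of_lt unit_lt, Nat.mod_eq_of_lt hr] using
      congrArg (· % (2 * (p - 1))) hdeg
  have support_eq : S.map digitSupport = Multiset.replicate (p - 1) (range n) := by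
    refine eq_replicate_of_sum_map_sum_pow_eq (p := p) (nonempty_range_iff.2 hn) (by lia)
      (by rwa [Multiset.card_map]) ?_
    exact Nat.eq_of_mul_eq_mul_left (by lia) (Nat.add_right_cancel (unit_eq ▸ hdeg))
  obtain ⟨card_eq, hmem⟩ := Multiset.eq_replicate.1 support_eq
  obtain ⟨k, l, rfl⟩ := exists_eq_replicate_add_replicate fun x hx ↦
    eq_a_or_eq_h_of_digitSupport_eq_range hn (hmem _ (Multiset.mem_map_of_mem _ hx))
  obtain rfl : k = r := by simpa [unitDigit] using unit_eq
  obtain rfl : l = p - 1 - k := by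
    simp only [Multiset.card_map, Multiset.card_add, Multiset.card_replicate] at card_eq
    lia
  rfl

/-- for `n ≥ 2`, every finite multiset of May generators of total filtration
`p-1` and total degree `q(pⁿ - 1) + (p - 3)` contains `h n 0` at least twice; in particular
there is no admissible monomial with these total filtration and degree. -/
theorem stmt14 (p : ℕ) (hp : p.Prime) (hp5 : 5 ≤ p) (n : ℕ) (hn : 2 ≤ n) :
    (∀ S : Multiset MayGen, (∀ x ∈ S, x.IsValid) → totalFilt S = p - 1 →
      totalDeg p S = 2 * (p - 1) * (p ^ n - 1) + (p - 3) →
      2 ≤ S.count (MayGen.h n 0)) ∧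
    ¬ ∃ S : Multiset MayGen, (∀ x ∈ S, x.IsValid) ∧ Admissible S ∧
      totalFilt S = p - 1 ∧ totalDeg p S = 2 * (p - 1) * (p ^ n - 1) + (p - 3) := by
  have two_le_count {S : Multiset MayGen} (hfilt : totalFilt S = p - 1)
      (hdeg : totalDeg p S = 2 * (p - 1) * (p ^ n - 1) + (p - 3)) : 2 ≤ S.count (h n 0) := by
    rw [stmt14_general (by lia) (by lia) (hfilt ▸ card_le_totalFilt S) hdeg,
      Multiset.count_add, Multiset.count_replicate_self]
    lia
  exact ⟨fun _ _ ↦ two_le_count, fun ⟨_, _, hadm, hfilt, hdeg⟩ ↦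
    absurd ((two_le_count hfilt hdeg).trans (hadm n 0)) (by decide)⟩
end
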